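/- arXiv:2508.17308 — 2 statements merged into one kernel-verified Lean document; each statement's English description precedes it below -/
import Mathlib

section
/- Let a be a repelling periodic point of g lying in the unbounded component Ω of ℂ \ P_g, and let z ∈ U ∩ Ω. Then for every simply connected domain W ⊂ Ω containing both a and z, there exists a sequence of well-defined inverse branches g^{-n_k} : W → ℂ (with n_k → ∞) such that g^{-n_k} converges to the constant a uniformly on compact subsets of W. -/
open Set Function Metric Topology Filter

noncomputable section

/-- A topological disk: a (nonempty, connected) simply connected planar domain. -/
def IsTopDisk (V : Set ℂ) : Prop :=
  IsOpen V ∧ IsConnected V ∧ SimplyConnectedSpace V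

/-- Critical points of `g` lying in `U'`. -/
def critPts (g : ℂ → ℂ) (U' : Set ℂ) : Set ℂ := {z | z ∈ U' ∧ deriv g z = 0}

/-- The postcritical set of `g : U' → U`. -/
def postCrit (g : ℂ → ℂ) (U' : Set ℂ) : Set ℂ :=
  closure (⋃ n : ℕ, g^[n] '' critPts g U')

/-- `g : U' → U` is a proper map: preimages of compact subsets of `U` are compact. -/
def ProperOn (g : ℂ → ℂ) (U' U : Set ℂ) : Prop :=
  ∀ K : Set ℂ, K ⊆ U → IsCompact K → IsCompact (U' ∩ g ⁻¹' K)

/-- `g : U' → U` has degree `d`: every point of `U` has a preimage, and every point of `U`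
which is not a critical value has exactly `d` preimages in `U'`. -/
def HasDeg (g : ℂ → ℂ) (U' U : Set ℂ) (d : ℕ) : Prop :=
  (∀ w ∈ U, (U' ∩ g ⁻¹' {w}).Nonempty) ∧
  ∀ w ∈ U, w ∉ g '' critPts g U' → (U' ∩ g ⁻¹' {w}).ncard = d

/-- Standing assumptions: `U' ⊆ U` are simply connected domains in `ℂ` with `U' ≠ U`,
`g : U' → U` is a proper holomorphic map of degree `d ≥ 2`, all forward iterates of the
critical points are defined, the postcritical set is a compact subset of `U'`, and if the
postcritical set is a singleton `{c}` then `g⁻¹(c) ≠ {c}`. -/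
structure PLSetting (g : ℂ → ℂ) (U' U : Set ℂ) (d : ℕ) : Prop where
  disk' : IsTopDisk U'
  disk : IsTopDisk U
  subset : U' ⊆ U
  ne : U' ≠ U
  two_le_d : 2 ≤ d
  holo : DifferentiableOn ℂ g U'
  mapsTo : MapsTo g U' U
  proper : ProperOn g U' U
  deg : HasDeg g U' U d
  crit_orbit : ∀ c ∈ critPts g U', ∀ n : ℕ, g^[n] c ∈ U'
  postCrit_compact : IsCompact (postCrit g U')
  postCrit_subset : postCrit g U' ⊆ U'
  postCrit_singleton : ∀ c : ℂ, postCrit g U' = {c} → U' ∩ g ⁻¹' {c} ≠ {c}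

/-- Holomorphic functions, uniformly bounded on a ball and tending to zero uniformly near the
centre, tend to zero uniformly on smaller concentric balls. -/
theorem spread_zero {F : ℕ → ℂ → ℂ} {c : ℂ} {R R' M ρ : ℝ} (hρ : 0 < ρ) (hR' : 0 < R')
    (hRR : R' < R) (hd : ∀ n, DifferentiableOn ℂ (F n) (ball c R))
    (hb : ∀ n, ∀ w ∈ ball c R, ‖F n w‖ ≤ M)
    (h : TendstoUniformlyOn F (fun _ => 0) atTop (ball c ρ)) :
    TendstoUniformlyOn F (fun _ => 0) atTop (ball c R') := by
  obtain ⟨R₁, h1, h2⟩ := exists_between hRR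
  have hR₁ : 0 < R₁ := hR'.trans h1
  have cauchy : ∀ (n k : ℕ) (r C : ℝ), 0 < r → r < R → (∀ w ∈ sphere c r, ‖F n w‖ ≤ C) →
      ‖iteratedDeriv k (F n) c‖ ≤ k.factorial * C / r ^ k := by
    intro n k r C hr hrR hC
    refine Complex.norm_iteratedDeriv_le_of_forall_mem_sphere_norm_le k hr ?_ hC
    refine ((hd n).mono ?_).diffContOnCl
    exact (closure_ball_subset_closedBall).trans (closedBall_subset_ball hrR)
  set b : ℕ → ℕ → ℝ := fun n k => R' ^ k * (‖iteratedDeriv k (F n) c‖ / k.factorial) with hbdef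
  have hb0 : ∀ n k, 0 ≤ b n k := fun n k => by positivity
  have hbb : ∀ n k, b n k ≤ M * (R' / R₁) ^ k := by
    intro n k
    have := cauchy n k R₁ M hR₁ h2 (fun w hw => hb n w (sphere_subset_closedBall.trans
      (closedBall_subset_ball h2) hw))
    have hk : (0 : ℝ) < k.factorial := by positivity
    calc b n k ≤ R' ^ k * ((k.factorial * M / R₁ ^ k) / k.factorial) := by
          simp only [hbdef]; gcongr
      _ = M * (R' / R₁) ^ k := by rw [div_pow]; field_simp
  have hsum : Summable (fun k : ℕ => M * (R' / R₁) ^ k) :=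
    (summable_geometric_of_lt_one (by positivity) ((div_lt_one hR₁).2 h1)).mul_left M
  have hbs : ∀ n, Summable (b n) := fun n => Summable.of_nonneg_of_le (hb0 n) (hbb n) hsum
  have hlim : ∀ k, Tendsto (fun n => b n k) atTop (𝓝 0) := by
    intro k
    obtain ⟨r, hr0, hr⟩ := exists_between (lt_min hρ (hR'.trans hRR))
    have hk : (0 : ℝ) < k.factorial := by positivity
    rw [Metric.tendsto_atTop]
    intro ε hε
    have hC : 0 < ε * r ^ k / (2 * R' ^ k) := by positivity
    obtain ⟨N, hN⟩ := eventually_atTop.1 (Metric.tendstoUniformlyOn_iff.1 h _ hC)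
    refine ⟨N, fun n hn => ?_⟩
    have := cauchy n k r (ε * r ^ k / (2 * R' ^ k)) hr0 (hr.trans_le (min_le_right _ _))
      (fun w hw => by
        have := hN n hn w ((sphere_subset_closedBall.trans
          (closedBall_subset_ball (hr.trans_le (min_le_left _ _)))) hw)
        rw [dist_zero_left] at this
        exact this.le)
    rw [Real.dist_0_eq_abs, abs_of_nonneg (hb0 n k)]
    calc b n k ≤ R' ^ k * ((k.factorial * (ε * r ^ k / (2 * R' ^ k)) / r ^ k) / k.factorial) := by
          simp only [hbdef]; gcongr
      _ = ε / 2 := by field_simp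
      _ < ε := by linarith
  have hT : Tendsto (fun n => ∑' k, b n k) atTop (𝓝 (∑' _ : ℕ, (0 : ℝ))) := by
    refine tendsto_tsum_of_dominated_convergence hsum hlim (Eventually.of_forall fun n k => ?_)
    rw [Real.norm_of_nonneg (hb0 n k)]
    exact hbb n k
  rw [tsum_zero] at hT
  rw [Metric.tendstoUniformlyOn_iff]
  intro ε hε
  filter_upwards [hT.eventually (gt_mem_nhds hε)] with n hn w hw
  rw [dist_zero_left]
  refine lt_of_le_of_lt ?_ hn
  have hs := Complex.hasSum_taylorSeries_on_ball (hd n) (ball_subset_ball hRR.le hw)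
  rw [← hs.tsum_eq]
  refine tsum_of_norm_bounded (hbs n).hasSum fun k => ?_
  have hwk : ‖w - c‖ ≤ R' := by
    rw [← dist_eq_norm]; exact (mem_ball.1 hw).le
  rw [norm_smul, norm_smul, norm_inv, norm_pow]
  simp only [hbdef, Complex.norm_natCast]
  rw [← mul_assoc, mul_comm _ (‖w - c‖ ^ k), mul_assoc, div_eq_inv_mul]
  gcongr

/-- A Vitali type theorem: uniformly bounded holomorphic functions on a domain which converge to
a constant near a point converge to that constant locally uniformly. -/
theorem vitali_const {W : Set ℂ} (hWo : IsOpen W) (hWc : IsPreconnected W) {f : ℕ → ℂ → ℂ}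
    (hd : ∀ n, DifferentiableOn ℂ (f n) W) (hb : ∀ n, ∀ w ∈ W, ‖f n w‖ ≤ 1) {a c : ℂ}
    (ha : a ∈ W) {δ : ℝ} (hδ : 0 < δ)
    (h : TendstoUniformlyOn f (fun _ => c) atTop (ball a δ)) :
    TendstoLocallyUniformlyOn f (fun _ => c) atTop W := by
  set S : Set ℂ := {w | ∃ r > 0, TendstoUniformlyOn f (fun _ => c) atTop (ball w r)} with hS
  have hSo : IsOpen S := by
    rw [Metric.isOpen_iff]
    rintro w ⟨r, hr, hw⟩
    refine ⟨r / 2, by positivity, fun v hv => ⟨r / 2, by positivity, hw.mono ?_⟩⟩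
    refine ball_subset_ball' ?_
    have := mem_ball.1 hv
    linarith
  have key : W ⊆ S := by
    refine hWc.subset_of_closure_inter_subset hSo ⟨a, ha, δ, hδ, h⟩ ?_
    rintro w ⟨hwS, hwW⟩
    obtain ⟨r, hr, hrW⟩ := Metric.isOpen_iff.1 hWo w hwW
    obtain ⟨v, ⟨ρ, hρ, hv⟩, hwv⟩ := Metric.mem_closure_iff.1 hwS (r / 4) (by positivity)
    have hvW : ball v (3 * r / 4) ⊆ W := (ball_subset_ball' (by
      rw [dist_comm]; linarith)).trans hrW
    have := spread_zero (F := fun n x => f n x - c) (c := v) (R := 3 * r / 4) (R' := r / 2)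
      (M := 1 + ‖c‖) hρ (by positivity) (by linarith) (fun n => ((hd n).mono hvW).sub_const c)
      (fun n x hx => (norm_sub_le _ _).trans (by gcongr; exact hb n x (hvW hx)))
      (by
        rw [Metric.tendstoUniformlyOn_iff] at hv ⊢
        intro ε hε
        filter_upwards [hv ε hε] with n hn x hx
        have := hn x hx
        rwa [dist_zero_left, ← dist_eq_norm, dist_comm])
    refine ⟨r / 4, by positivity, ?_⟩
    have this := this.mono (s' := ball w (r / 4)) (ball_subset_ball' (by linarith))
    rw [Metric.tendstoUniformlyOn_iff] at this ⊢
    intro ε hε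
    filter_upwards [this ε hε] with n hn x hx
    have := hn x hx
    rwa [dist_zero_left, ← dist_eq_norm, dist_comm] at this
  rw [Metric.tendstoLocallyUniformlyOn_iff]
  intro ε hε w hw
  obtain ⟨r, hr, hwr⟩ := key hw
  exact ⟨ball w r, mem_nhdsWithin_of_mem_nhds (ball_mem_nhds w hr),
    Metric.tendstoUniformlyOn_iff.1 hwr ε hε⟩

/-- A simply connected proper domain embeds holomorphically into the unit disc. -/
theorem exists_disc_embedding {V : Set ℂ} (hVo : IsOpen V) (hVc : IsSimplyConnected V)
    (hV : V ≠ univ) :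
    ∃ f : ℂ → ℂ, DifferentiableOn ℂ f V ∧ MapsTo f V (ball 0 1) ∧ InjOn f V ∧
      ∀ z ∈ V, f '' V ∈ 𝓝 (f z) ∧ Filter.map f (𝓝 z) = 𝓝 (f z) := by
  obtain ⟨b, hbV⟩ := (ne_univ_iff_exists_notMem V).1 hV
  obtain ⟨s, hsc, hs⟩ := Complex.exists_continuousOn_pow_eq hVc hVo (g := fun x : ℂ => x - b)
    (by fun_prop) (by
      rintro ⟨x, hx, hxb⟩
      exact hbV ((sub_eq_zero.1 hxb) ▸ hx)) two_ne_zero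
  have hs0 : ∀ z ∈ V, s z ≠ 0 := by
    intro z hz h0
    have := hs z
    rw [h0, zero_pow two_ne_zero] at this
    exact hbV ((sub_eq_zero.1 this.symm) ▸ hz)
  have hds : ∀ z ∈ V, HasStrictDerivAt s (2 * s z)⁻¹ z := by
    intro z hz
    apply HasStrictDerivAt.of_local_left_inverse (f := fun x => x ^ 2 + b)
    · exact hsc.continuousAt <| hVo.mem_nhds hz
    · simpa using (hasStrictDerivAt_pow 2 (s z)).add_const b
    · simpa using hs0 z hz
    · exact .of_forall fun x => by simp [hs x]
  obtain ⟨x, hx⟩ := hVc.nonempty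
  have hnb : s '' V ∈ 𝓝 (s x) := by
    rw [← (hds x hx).map_nhds_eq (by simpa using hs0 x hx)]
    exact Filter.image_mem_map <| hVo.mem_nhds hx
  obtain ⟨ε, hε, hball⟩ := Metric.mem_nhds_iff.1 hnb
  have hfar : ∀ z ∈ V, ε ≤ ‖s z + s x‖ := by
    intro z hz
    by_contra! hlt
    have : -s z ∈ ball (s x) ε := by
      rw [mem_ball, dist_eq_norm, ← norm_neg]
      simpa [add_comm] using hlt
    obtain ⟨y, hy, hyz⟩ := hball this
    have e : y = z := by
      have h1 := hs y
      rw [hyz, neg_sq, hs z] at h1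
      exact (sub_left_injective h1).symm
    subst e
    exact hs0 y hy (by linear_combination hyz / 2)
  have hne : ∀ z ∈ V, s z + s x ≠ 0 := fun z hz h0 => by
    have := hfar z hz
    rw [h0, norm_zero] at this
    linarith
  have hdf : ∀ z ∈ V, HasStrictDerivAt (fun z => (ε / 2 : ℂ) / (s z + s x))
      (-(ε / 2 : ℂ) * (2 * s z)⁻¹ / (s z + s x) ^ 2) z := by
    intro z hz
    have h1 := (hasStrictDerivAt_const z (ε / 2 : ℂ)).fun_div ((hds z hz).add_const (s x)) (hne z hz)
    have e : (0 * (s z + s x) - (ε / 2 : ℂ) * (2 * s z)⁻¹) / (s z + s x) ^ 2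
        = -(ε / 2 : ℂ) * (2 * s z)⁻¹ / (s z + s x) ^ 2 := by ring
    rw [← e]
    exact h1
  have hεc : (ε : ℂ) ≠ 0 := by exact_mod_cast hε.ne'
  have hmap : ∀ z ∈ V, Filter.map (fun z => (ε / 2 : ℂ) / (s z + s x)) (𝓝 z)
      = 𝓝 ((ε / 2 : ℂ) / (s z + s x)) := fun z hz => (hdf z hz).map_nhds_eq (by
    have := hne z hz
    have := hs0 z hz
    simp [*])
  refine ⟨fun z => (ε / 2 : ℂ) / (s z + s x), fun z hz =>
    (hdf z hz).hasDerivAt.differentiableAt.differentiableWithinAt, ?_, ?_, fun z hz => ⟨?_, hmap z hz⟩⟩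
  · intro z hz
    have h1 := hfar z hz
    have : (0 : ℝ) < ‖s z + s x‖ := hε.trans_le h1
    rw [mem_ball_zero_iff, norm_div, div_lt_one this]
    have : ‖(ε / 2 : ℂ)‖ = ε / 2 := by
      rw [norm_div, Complex.norm_real, Real.norm_of_nonneg hε.le]; norm_num
    rw [this]
    linarith
  · intro z hz w hw hzw
    have h1 := hne z hz
    have h2 := hne w hw
    simp only at hzw
    rw [div_eq_div_iff h1 h2] at hzw
    have h3 : s w = s z := by
      have := mul_left_cancel₀ (div_ne_zero hεc two_ne_zero) hzw
      linear_combination this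
    have := hs w
    rw [h3, hs z] at this
    exact sub_left_injective this
  · rw [← hmap z hz]
    exact Filter.image_mem_map <| hVo.mem_nhds hz

/-- Values of critical points lie in the postcritical set. -/
theorem deriv_ne_zero_of_notMem {g : ℂ → ℂ} {U' : Set ℂ} {x : ℂ} (hx : x ∈ U')
    (hgx : g x ∉ postCrit g U') : deriv g x ≠ 0 := fun h0 =>
  hgx (subset_closure (mem_iUnion.2 ⟨1, x, ⟨hx, h0⟩, rfl⟩))

/-- The postcritical set is forward invariant. -/
theorem postCrit_forward {g : ℂ → ℂ} {U' U : Set ℂ} {d : ℕ} (H : PLSetting g U' U d) {x : ℂ}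
    (hx : x ∈ postCrit g U') : g x ∈ postCrit g U' := by
  have hc : ContinuousAt g x := H.holo.continuousOn.continuousAt
    (H.disk'.1.mem_nhds (H.postCrit_subset hx))
  refine closure_mono ?_ (hc.continuousWithinAt.mem_closure_image hx)
  rintro _ ⟨y, hy, rfl⟩
  obtain ⟨n, c, hc, rfl⟩ := mem_iUnion.1 hy
  exact mem_iUnion.2 ⟨n + 1, c, hc, by rw [iterate_succ_apply']⟩

theorem strictDeriv {g : ℂ → ℂ} {U' U : Set ℂ} {d : ℕ} (H : PLSetting g U' U d) {x : ℂ}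
    (hx : x ∈ U') : HasStrictDerivAt g (deriv g x) x :=
  (H.holo.analyticAt (H.disk'.1.mem_nhds hx)).hasStrictDerivAt

/-- `g` is a covering over the complement of the postcritical set. -/
theorem covering {g : ℂ → ℂ} {U' U : Set ℂ} {d : ℕ} (H : PLSetting g U' U d) :
    IsCoveringMapOn (H.mapsTo.restrict g U' U) {x : U | (x : ℂ) ∉ postCrit g U'} := by
  have hcont : Continuous (H.mapsTo.restrict g U' U) :=
    H.holo.continuousOn.mapsToRestrict H.mapsTo
  have : LocallyCompactSpace U := H.disk.1.locallyCompactSpace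
  have hprop : IsProperMap (H.mapsTo.restrict g U' U) := by
    rw [isProperMap_iff_isCompact_preimage]
    refine ⟨hcont, fun K hK => ?_⟩
    rw [Subtype.isCompact_iff]
    convert H.proper (Subtype.val '' K) (by rintro _ ⟨y, _, rfl⟩; exact y.2)
      (hK.image continuous_subtype_val) using 1
    ext x
    constructor
    · rintro ⟨y, hy, rfl⟩
      exact ⟨y.2, _, hy, rfl⟩
    · rintro ⟨hx, y, hy, hxy⟩
      refine ⟨⟨x, hx⟩, ?_, rfl⟩
      rw [mem_preimage]
      convert hy
      exact Subtype.ext hxy.symm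
  refine hprop.isClosedMap.isCoveringMapOn_of_isLocalHomeomorphOn ?_ ?_
  · intro x hx
    have h1 : (x : ℂ) ∉ g '' critPts g U' := fun ⟨y, hy, hyx⟩ =>
      hx (hyx ▸ subset_closure (mem_iUnion.2 ⟨1, y, hy, rfl⟩))
    have h2 := H.deg.2 x x.2 h1
    have h3 : (U' ∩ g ⁻¹' {(x : ℂ)}).Finite := Set.finite_of_ncard_ne_zero (by
      have := H.two_le_d
      omega)
    refine Set.Finite.of_finite_image (f := Subtype.val) (h3.subset ?_)
      Subtype.val_injective.injOn
    rintro _ ⟨y, hy, rfl⟩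
    exact ⟨y.2, congrArg Subtype.val hy⟩
  · refine IsLocalHomeomorphOn.of_comp_left (g := Subtype.val) ?_
      H.disk.1.isOpenEmbedding_subtypeVal.isLocalHomeomorph.isLocalHomeomorphOn
      (fun x _ => hcont.continuousAt)
    change IsLocalHomeomorphOn (g ∘ Subtype.val) _
    refine IsLocalHomeomorphOn.comp (t := {x | x ∈ U' ∧ g x ∉ postCrit g U'}) ?_
      H.disk'.1.isOpenEmbedding_subtypeVal.isLocalHomeomorph.isLocalHomeomorphOn
      (fun x hx => ⟨x.2, hx⟩)
    rintro x ⟨hx, hgx⟩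
    have hs := (strictDeriv H hx).hasStrictFDerivAt_equiv (deriv_ne_zero_of_notMem hx hgx)
    exact ⟨hs.toOpenPartialHomeomorph g, hs.mem_toOpenPartialHomeomorph_source, rfl⟩

/-- Lifting one step through `g`. -/
theorem lift_step {g : ℂ → ℂ} {U' U : Set ℂ} {d : ℕ} (H : PLSetting g U' U d)
    {W : Set ℂ} (hW : IsTopDisk W) {f : ℂ → ℂ} (hf : DifferentiableOn ℂ f W)
    (hfU : ∀ w ∈ W, f w ∈ U ∧ f w ∉ postCrit g U') {a b : ℂ} (ha : a ∈ W) (hb : b ∈ U')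
    (hgb : g b = f a) :
    ∃ F : ℂ → ℂ, DifferentiableOn ℂ F W ∧
      (∀ w ∈ W, F w ∈ U' ∧ F w ∉ postCrit g U' ∧ g (F w) = f w) ∧ F a = b := by
  classical
  obtain ⟨hWo, -, hWs⟩ := hW
  have : LocallyPathConnectedSpace W := hWo.locallyPathConnectedSpace
  let f' : C(W, U) := ⟨fun w => ⟨f w, (hfU w w.2).1⟩,
    (continuousOn_iff_continuous_domRestrict.1 hf.continuousOn).subtype_mk _⟩
  obtain ⟨F, ⟨hFa, hF⟩, -⟩ := (covering H).existsUnique_continuousMap_lifts f' (a₀ := ⟨a, ha⟩)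
    (e₀ := ⟨b, hb⟩) (Subtype.ext hgb) (fun w => (hfU w w.2).2)
  have hgF : ∀ w : W, g (F w) = f w := fun w => congrArg Subtype.val (congrFun hF w)
  let G : ℂ → ℂ := fun w => if hw : w ∈ W then F ⟨w, hw⟩ else 0
  have hG : ∀ w (hw : w ∈ W), G w = F ⟨w, hw⟩ := fun w hw => dif_pos hw
  have hGc : ContinuousOn G W := by
    rw [continuousOn_iff_continuous_domRestrict]
    have : W.domRestrict G = fun w => (F w : ℂ) := by
      ext w
      exact hG w w.2
    rw [this]
    fun_prop
  have hGp : ∀ w ∈ W, G w ∈ U' ∧ G w ∉ postCrit g U' ∧ g (G w) = f w := by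
    intro w hw
    have h1 : g (G w) = f w := by rw [hG w hw]; exact hgF _
    refine ⟨by rw [hG w hw]; exact (F _).2, fun hP => ?_, h1⟩
    exact (hfU w hw).2 (h1 ▸ postCrit_forward H hP)
  refine ⟨G, fun w hw => ?_, hGp, by rw [hG a ha, hFa]⟩
  obtain ⟨h1, h2, h3⟩ := hGp w hw
  have hs := strictDeriv H h1
  have hne : deriv g (G w) ≠ 0 := deriv_ne_zero_of_notMem h1 (h3 ▸ (hfU w hw).2)
  have hinv := hs.hasStrictFDerivAt_equiv hne |>.eventually_left_inverse
  have hGw : ContinuousAt G w := hGc.continuousAt (hWo.mem_nhds hw)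
  have hder := (hs.to_localInverse hne).hasDerivAt
  have hfw : DifferentiableAt ℂ f w := hf.differentiableAt (hWo.mem_nhds hw)
  rw [h3] at hder
  have hcomp := hder.differentiableAt.comp w hfw
  refine (hcomp.congr_of_eventuallyEq ?_).differentiableWithinAt
  filter_upwards [hGw.eventually hinv, hWo.mem_nhds hw] with v hv hvW
  rw [comp_apply, ← (hGp v hvW).2.2]
  exact hv.symm

/-- A repelling fixed point expands distances locally. -/
theorem local_expand {G : ℂ → ℂ} {a : ℂ} (hfix : G a = a) (hrep : 1 < ‖deriv G a‖) :
    ∃ μ > 1, ∃ r > 0, ∀ x ∈ ball a r, μ * ‖x - a‖ ≤ ‖G x - a‖ := by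
  have hd : DifferentiableAt ℂ G a := by
    by_contra h
    rw [deriv_zero_of_not_differentiableAt h, norm_zero] at hrep
    linarith
  have ho := hd.hasDerivAt.isLittleO
  have hc : 0 < (‖deriv G a‖ - 1) / 2 := by linarith
  obtain ⟨r, hr, hb⟩ := Metric.eventually_nhds_iff_ball.1 (ho.def hc)
  refine ⟨(‖deriv G a‖ + 1) / 2, by linarith, r, hr, fun x hx => ?_⟩
  have h1 := hb x hx
  rw [hfix, smul_eq_mul] at h1
  have h2 : ‖(x - a) * deriv G a‖ - ‖G x - a‖ ≤ ‖G x - a - (x - a) * deriv G a‖ := by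
    rw [← norm_neg (G x - a - _), neg_sub]
    exact norm_sub_norm_le _ _
  rw [norm_mul] at h2
  linarith

/-- A coherent sequence of inverse branches. -/
theorem exists_branches {g : ℂ → ℂ} {U' U : Set ℂ} {d : ℕ} (H : PLSetting g U' U d)
    {W : Set ℂ} (hW : IsTopDisk W) (hWU : ∀ w ∈ W, w ∈ U ∧ w ∉ postCrit g U') {a : ℂ} (ha : a ∈ W)
    (b : ℕ → ℂ) (hb : ∀ k, b k ∈ U') (hb0 : b 0 = a) (hgb : ∀ k, g (b (k + 1)) = b k) :
    ∃ F : ℕ → ℂ → ℂ, (∀ w, F 0 w = w) ∧ (∀ k, DifferentiableOn ℂ (F k) W) ∧ (∀ k, F k a = b k) ∧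
      (∀ k, ∀ w ∈ W, F (k + 1) w ∈ U' ∧ g (F (k + 1) w) = F k w) := by
  let Q : ℕ → (ℂ → ℂ) → Prop := fun k F => DifferentiableOn ℂ F W ∧
    (∀ w ∈ W, F w ∈ U ∧ F w ∉ postCrit g U') ∧ F a = b k
  have step : ∀ k F, Q k F → ∃ F', Q (k + 1) F' ∧ ∀ w ∈ W, F' w ∈ U' ∧ g (F' w) = F w := by
    rintro k F ⟨h1, h2, h3⟩
    obtain ⟨F', h4, h5, h6⟩ := lift_step H hW h1 h2 ha (hb (k + 1)) ((hgb k).trans h3.symm)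
    exact ⟨F', ⟨h4, fun w hw => ⟨H.subset (h5 w hw).1, (h5 w hw).2.1⟩, h6⟩,
      fun w hw => ⟨(h5 w hw).1, (h5 w hw).2.2⟩⟩
  choose! nxt hn1 hn2 using step
  let F : ℕ → ℂ → ℂ := fun n => Nat.rec (fun w => w) (fun k F => nxt k F) n
  have hQ : ∀ k, Q k (F k) := by
    intro k
    induction k with
    | zero => exact ⟨differentiableOn_id, hWU, hb0.symm⟩
    | succ k ih => exact hn1 k _ ih
  exact ⟨F, fun w => rfl, fun k => (hQ k).1, fun k => (hQ k).2.2, fun k => hn2 k _ (hQ k)⟩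

/-- **Lemma (inverse iterates converge to a repelling cycle).** Let `a` be a repelling
periodic point of `g` lying in the unbounded component `Ω` of `ℂ \ P_g`, and let
`z ∈ U ∩ Ω`. Then for every simply connected domain `W ⊆ Ω ∩ U` containing `a` and `z`
there is a sequence of well-defined inverse branches `g^{-n_k} : W → ℂ` (with `n_k → ∞`)
converging to the constant `a` uniformly on compact subsets of `W`. -/
theorem inverse_branches_to_repelling {g : ℂ → ℂ} {U' U : Set ℂ} {d : ℕ}
    (H : PLSetting g U' U d) {a z : ℂ} {p : ℕ}
    (hp : 1 ≤ p) (horb : ∀ n : ℕ, g^[n] a ∈ U') (hper : g^[p] a = a)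
    (hrep : 1 < ‖deriv (g^[p]) a‖)
    (haΩ : ¬ Bornology.IsBounded (connectedComponentIn (postCrit g U')ᶜ a))
    (hzU : z ∈ U) (hzΩ : z ∈ connectedComponentIn (postCrit g U')ᶜ a)
    {W : Set ℂ} (hW : IsTopDisk W)
    (hWΩ : W ⊆ connectedComponentIn (postCrit g U')ᶜ a) (hWU : W ⊆ U)
    (haW : a ∈ W) (hzW : z ∈ W) :
    ∃ (nk : ℕ → ℕ) (h : ℕ → ℂ → ℂ), StrictMono nk ∧
      (∀ k : ℕ, DifferentiableOn ℂ (h k) W ∧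
        ∀ w ∈ W, (∀ j < nk k, g^[j] (h k w) ∈ U') ∧ g^[nk k] (h k w) = w) ∧
      TendstoLocallyUniformlyOn (fun k : ℕ => h k) (fun _ => a) atTop W := by
  have hWU' : ∀ w ∈ W, w ∈ U ∧ w ∉ postCrit g U' := fun w hw =>
    ⟨hWU hw, connectedComponentIn_subset _ _ (hWΩ hw)⟩
  have hU'univ : U' ≠ univ := fun h => H.ne (H.subset.antisymm (h ▸ subset_univ U))
  obtain ⟨φ, hφd, hφb, hφi, hφn⟩ := exists_disc_embedding H.disk'.1 H.disk'.2.2 hU'univ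
  have haU' : a ∈ U' := horb 0
  have hmul : ∀ m : ℕ, g^[p * m] a = a := fun m => by
    rw [iterate_mul]
    exact iterate_fixed hper m
  obtain ⟨F, hF0, hFd, hFa, hFs⟩ := exists_branches H hW hWU' haW (fun k => g^[(p - 1) * k] a)
    (fun k => horb _) (by simp) (fun k => by
      rw [← iterate_succ_apply' g]
      have : (p - 1) * (k + 1) + 1 = (p - 1) * k + p := by
        rw [mul_add, mul_one]; omega
      rw [Nat.succ_eq_add_one, this, iterate_add_apply, hper])
  have hFit : ∀ j k, ∀ w ∈ W, g^[j] (F (k + j) w) = F k w := by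
    intro j
    induction j with
    | zero => intro k w hw; rfl
    | succ j ih =>
      intro k w hw
      rw [iterate_succ_apply, ← add_assoc, (hFs (k + j) w hw).2, ih k w hw]
  have hFU : ∀ k, 0 < k → ∀ w ∈ W, F k w ∈ U' := by
    intro k hk w hw
    obtain ⟨m, rfl⟩ := Nat.exists_eq_add_of_lt hk
    rw [zero_add]
    exact (hFs m w hw).1
  have hpk : ∀ k, 0 < p * (k + 1) := fun k => Nat.mul_pos hp k.succ_pos
  set h : ℕ → ℂ → ℂ := fun k => F (p * (k + 1)) with hh
  have hhU : ∀ k, ∀ w ∈ W, h k w ∈ U' := fun k w hw => hFU _ (hpk k) w hw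
  have hha : ∀ k, h k a = a := fun k => by
    simp only [hh, hFa]
    rw [mul_left_comm]
    exact hmul _
  have hhs : ∀ k, ∀ w ∈ W, g^[p] (h (k + 1) w) = h k w := fun k w hw =>
    hFit p (p * (k + 1)) w hw
  have hWnhds : W ∈ 𝓝 a := hW.1.mem_nhds haW
  -- pull back from the disc
  have pull : ∀ ε > 0, ∃ η > 0, ∀ x ∈ U', dist (φ x) (φ a) < η → x ∈ ball a ε := by
    intro ε hε
    have h1 : φ '' (U' ∩ ball a ε) ∈ 𝓝 (φ a) := by
      rw [← (hφn a haU').2]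
      exact Filter.image_mem_map (inter_mem (H.disk'.1.mem_nhds haU') (ball_mem_nhds a hε))
    obtain ⟨η, hη, hsub⟩ := Metric.mem_nhds_iff.1 h1
    refine ⟨η, hη, fun x hx hxη => ?_⟩
    obtain ⟨y, ⟨hy1, hy2⟩, hyx⟩ := hsub hxη
    exact hφi hy1 hx hyx ▸ hy2
  have hfd : ∀ k, DifferentiableOn ℂ (fun w => φ (h k w)) W := fun k =>
    hφd.comp (hFd _) (hhU k)
  have hfb : ∀ k, ∀ w ∈ W, ‖φ (h k w)‖ < 1 := fun k w hw =>
    mem_ball_zero_iff.1 (hφb (hhU k w hw))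
  obtain ⟨μ, hμ, r, hr, hexp⟩ := local_expand hper hrep
  obtain ⟨R, hR, hRW⟩ := Metric.mem_nhds_iff.1 hWnhds
  -- equicontinuity at `a`
  obtain ⟨η, hη, hηr⟩ := pull r hr
  obtain ⟨δ, hδ, hδR, hδη⟩ : ∃ δ > 0, δ ≤ R ∧ 2 / R * δ ≤ η := by
    refine ⟨min R (η * R / 2), by positivity, min_le_left _ _, ?_⟩
    calc 2 / R * min R (η * R / 2) ≤ 2 / R * (η * R / 2) := by
          gcongr; exact min_le_right _ _
      _ = η := by field_simp
  have hsmall : ∀ k, ∀ w ∈ ball a δ, h k w ∈ ball a r := by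
    intro k w hw
    have hwR : w ∈ ball a R := ball_subset_ball hδR hw
    refine hηr _ (hhU k w (hRW hwR)) ?_
    have hS := Complex.dist_le_div_mul_dist_of_mapsTo_ball (f := fun w => φ (h k w)) (c := a)
      (R₁ := R) (R₂ := 2) ((hfd k).mono hRW) (fun v hv => by
        rw [mem_closedBall, dist_eq_norm]
        have h1 := hfb k v (hRW hv)
        have h2 := hfb k a haW
        have h3 := norm_sub_le (φ (h k v)) (φ (h k a))
        linarith) hwR
    simp only [hha] at hS
    refine hS.trans_lt (lt_of_lt_of_le ?_ hδη)
    have := mem_ball.1 hw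
    gcongr
  have hgeo : ∀ k, ∀ w ∈ ball a δ, ‖h k w - a‖ ≤ r * (μ⁻¹) ^ k := by
    intro k w hw
    have hwW : w ∈ W := hRW (ball_subset_ball hδR hw)
    have hμ0 : 0 < μ := by linarith
    induction k with
    | zero =>
      have := mem_ball.1 (hsmall 0 w hw)
      rw [dist_eq_norm] at this
      simpa using this.le
    | succ k ih =>
      have h1 := hexp _ (hsmall (k + 1) w hw)
      rw [hhs k w hwW] at h1
      have h2 := h1.trans ih
      rw [pow_succ, ← mul_assoc, ← div_eq_mul_inv, le_div_iff₀ hμ0, mul_comm]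
      exact h2
  have hunif : TendstoUniformlyOn (fun k w => φ (h k w)) (fun _ => φ a) atTop (ball a δ) := by
    rw [Metric.tendstoUniformlyOn_iff]
    intro ε hε
    have hc : ContinuousAt φ a := hφd.continuousOn.continuousAt (H.disk'.1.mem_nhds haU')
    obtain ⟨τ, hτ, hτc⟩ := Metric.continuousAt_iff.1 hc ε hε
    have hlim : Tendsto (fun k : ℕ => r * (μ⁻¹) ^ k) atTop (𝓝 (r * 0)) :=
      (tendsto_pow_atTop_nhds_zero_of_lt_one (by positivity) (inv_lt_one_of_one_lt₀ hμ)).const_mul r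
    rw [mul_zero] at hlim
    filter_upwards [hlim.eventually (gt_mem_nhds hτ)] with k hk w hw
    rw [dist_comm]
    refine hτc ?_
    rw [dist_eq_norm]
    exact (hgeo k w hw).trans_lt hk
  have hconv := vitali_const hW.1 hW.2.1.isPreconnected hfd (fun k w hw => (hfb k w hw).le) haW hδ
    hunif
  refine ⟨fun k => p * (k + 1), h, ?_, fun k => ⟨hFd _, fun w hw => ⟨fun j hj => ?_, ?_⟩⟩, ?_⟩
  · intro i j hij
    exact Nat.mul_lt_mul_of_pos_left (by omega) hp
  · obtain ⟨m, hm⟩ := Nat.exists_eq_add_of_lt hj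
    have e : p * (k + 1) = (m + 1) + j := by
      simp only at hm
      omega
    simp only [hh, e]
    rw [hFit j (m + 1) w hw]
    exact hFU _ m.succ_pos w hw
  · have := hFit (p * (k + 1)) 0 w hw
    rw [zero_add, hF0] at this
    exact this
  · rw [Metric.tendstoLocallyUniformlyOn_iff] at hconv ⊢
    intro ε hε w hw
    obtain ⟨η', hη', hpull⟩ := pull ε hε
    obtain ⟨t, ht, htc⟩ := hconv η' hη' w hw
    refine ⟨t ∩ W, inter_mem ht self_mem_nhdsWithin, ?_⟩
    filter_upwards [htc] with k hk y hy
    have h1 := hk y hy.1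
    rw [dist_comm] at h1 ⊢
    exact hpull _ (hhU k y hy.2) h1
end
end

section
/- Let X be a compact forward invariant set (g(X) ⊂ X) with P_g ⊂ X, and let D_∞ = U \ hull(X). Then g⁻¹(D_∞) ⊂ D_∞ and g(hull(X)) ⊂ hull(X). -/
open Set Function Metric Topology Filter

noncomputable section

/-- The topological hull of `X`: the complement of the unbounded component of `ℂ \ X`. -/
def topHull (X : Set ℂ) : Set ℂ :=
  {z | Bornology.IsBounded (connectedComponentIn Xᶜ z)}

/-- The closure of a component of the complement of a closed set adds only points of the set. -/
theorem closure_component_subset {X : Set ℂ} (hX : IsClosed X) (z : ℂ) :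
    closure (connectedComponentIn Xᶜ z) ⊆ connectedComponentIn Xᶜ z ∪ X := by
  intro x hx
  by_cases hxX : x ∈ X
  · exact Or.inr hxX
  left
  have hopen : IsOpen (connectedComponentIn Xᶜ x) := hX.isOpen_compl.connectedComponentIn
  obtain ⟨y, hy1, hy2⟩ := mem_closure_iff.1 hx _ hopen (mem_connectedComponentIn hxX)
  rw [connectedComponentIn_eq hy2, ← connectedComponentIn_eq hy1]
  exact mem_connectedComponentIn hxX

/-- There is no continuous logarithm of `z - z₀` on a circle around `z₀`. -/
theorem no_log_on_circle {f : ℂ → ℂ} (hf : Continuous f) (z₀ : ℂ) {R : ℝ} (hR : 0 < R)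
    (h : ∀ z, dist z z₀ = R → Complex.exp (f z) = z - z₀) : False := by
  let c : ℝ → ℂ := fun θ => z₀ + R * Complex.exp (θ * Complex.I)
  have hc : Continuous c := by fun_prop
  have hd : ∀ θ, dist (c θ) z₀ = R := by
    intro θ
    simp [c, dist_eq_norm, Complex.norm_exp_ofReal_mul_I, abs_of_pos hR]
  have he : ∀ θ, Complex.exp (f (c θ)) = R * Complex.exp (θ * Complex.I) := by
    intro θ
    rw [h _ (hd θ)]
    simp [c]
  have h0 : Complex.exp (f (c 0)) = R := by simpa using he 0
  have key : (fun θ : ℝ => f (c θ)) = fun θ : ℝ => f (c 0) + θ * Complex.I := by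
    refine Complex.isCoveringMap_exp.eq_of_comp_eq (hf.comp hc) (by fun_prop) ?_ 0 (by simp)
    funext θ
    apply Subtype.ext
    simp [he θ, Complex.exp_add, h0]
  have h2 := congrFun key (2 * Real.pi)
  have hper : c (2 * Real.pi) = c 0 := by
    simp [c, Complex.exp_two_pi_mul_I]
  simp only [hper] at h2
  have h3 : ((2 * Real.pi : ℝ) : ℂ) * Complex.I = 0 := by
    simpa using h2
  simp [Real.pi_ne_zero] at h3

/-- The hull of a compact subset of a simply connected domain stays in the domain. -/
theorem topHull_subset {V X : Set ℂ} (hV : IsTopDisk V) (hX : IsCompact X) (hXV : X ⊆ V) :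
    topHull X ⊆ V := by
  classical
  intro z₀ hz₀
  by_contra hzV
  have hzX : z₀ ∉ X := fun h => hzV (hXV h)
  obtain ⟨hVo, -, hVs⟩ := hV
  obtain ⟨l, hlc, hl⟩ := Complex.exists_continuousOn_eqOn_exp_comp (U := V) hVs hVo
    (g := fun z => z - z₀) (by fun_prop)
    (by rintro ⟨w, hw, hw0⟩; exact hzV (by rwa [sub_eq_zero.1 hw0] at hw))
  obtain ⟨L, hL⟩ := ContinuousMap.exists_restrict_eq hX.isClosed
    (⟨fun x : X => l x, (hlc.mono hXV).comp_continuous continuous_subtype_val (fun x => x.2)⟩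
      : C(X, ℂ))
  have hLX : ∀ x ∈ X, Complex.exp (L x) = x - z₀ := by
    intro x hx
    have h1 : L x = l x := congrArg (fun F : C(X, ℂ) => F ⟨x, hx⟩) hL
    rw [h1]
    exact hl (hXV hx)
  set W := connectedComponentIn Xᶜ z₀ with hW
  have hWo : IsOpen W := hX.isClosed.isOpen_compl.connectedComponentIn
  have hz₀W : z₀ ∈ W := mem_connectedComponentIn hzX
  have hWb : Bornology.IsBounded W := hz₀
  let F : ℂ → ℂ := W.piecewise (fun z => Complex.exp (L z)) (fun z => z - z₀)
  have hF : Continuous F := by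
    refine Continuous.piecewise ?_ (by fun_prop) (by fun_prop)
    intro x hx
    rw [hWo.frontier_eq] at hx
    exact hLX x ((closure_component_subset hX.isClosed z₀ hx.1).resolve_left hx.2)
  have hF0 : ∀ z, F z ≠ 0 := by
    intro z
    by_cases hz : z ∈ W
    · simp [F, hz, Complex.exp_ne_zero]
    · simp only [F, hz, not_false_eq_true, Set.piecewise_eq_of_notMem]
      intro h
      exact hz (by rwa [sub_eq_zero.1 h])
  have huniv : IsSimplyConnected (univ : Set ℂ) := by
    have : ContractibleSpace (univ : Set ℂ) :=
      (Homeomorph.Set.univ ℂ).contractibleSpace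
    exact SimplyConnectedSpace.ofContractible _
  obtain ⟨f, hfc, hf⟩ := Complex.exists_continuousOn_eqOn_exp_comp huniv isOpen_univ
    (g := F) hF.continuousOn (by rintro ⟨w, -, hw⟩; exact hF0 w hw)
  obtain ⟨R, hR, hWR⟩ := hWb.subset_ball_lt 0 z₀
  refine no_log_on_circle (continuousOn_univ.1 hfc) z₀ hR ?_
  intro z hz
  have hzW : z ∉ W := fun h => by
    have := hWR h
    rw [mem_ball, hz] at this
    exact lt_irrefl _ this
  have := hf (mem_univ z)
  simpa [F, hzW] using this

/-- **Proposition (invariance of the hull).** Let `X ⊆ U'` be a compact forward invariant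
set (`g(X) ⊆ X`) containing the postcritical set, and let `D_∞ = U \ hull(X)`. Then
`g⁻¹(D_∞) ⊆ D_∞` and `g(hull(X)) ⊆ hull(X)`. -/
theorem hull_invariance {g : ℂ → ℂ} {U' U : Set ℂ} {d : ℕ}
    (H : PLSetting g U' U d) {X : Set ℂ}
    (hXcomp : IsCompact X) (hXsub : X ⊆ U') (hXinv : g '' X ⊆ X)
    (hPX : postCrit g U' ⊆ X) :
    U' ∩ g ⁻¹' (U \ topHull X) ⊆ U \ topHull X ∧
    g '' topHull X ⊆ topHull X := by
  have hull_sub : topHull X ⊆ U' := topHull_subset H.disk' hXcomp hXsub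
  have hopen : ∀ s ⊆ U', IsOpen s → IsOpen (g '' s) := by
    have han : AnalyticOnNhd ℂ g U' := H.holo.analyticOnNhd H.disk'.1
    refine (han.is_constant_or_isOpen H.disk'.2.1.isPreconnected).resolve_left ?_
    rintro ⟨w, hw⟩
    have hU : U = {w} := by
      refine (H.disk.2.1.nonempty.subset_singleton_iff).1 ?_
      intro y hy
      obtain ⟨x, hx, hxy⟩ := H.deg.1 y hy
      have h1 : g x = y := hxy
      rw [← h1, hw x hx]
      rfl
    exact not_isOpen_singleton w (hU ▸ H.disk.1)
  have part2 : g '' topHull X ⊆ topHull X := by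
    rintro _ ⟨z, hz, rfl⟩
    by_cases hzX : z ∈ X
    · have : g z ∉ Xᶜ := fun h => h (hXinv (mem_image_of_mem g hzX))
      simp [topHull, connectedComponentIn_eq_empty this]
    by_cases hgX : g z ∈ X
    · have : g z ∉ Xᶜ := fun h => h hgX
      simp [topHull, connectedComponentIn_eq_empty this]
    set W := connectedComponentIn Xᶜ z with hW
    have hWb : Bornology.IsBounded W := hz
    have hWo : IsOpen W := hXcomp.isClosed.isOpen_compl.connectedComponentIn
    have hzW : z ∈ W := mem_connectedComponentIn hzX
    have hWU : W ⊆ U' := by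
      intro y hy
      refine hull_sub ?_
      change Bornology.IsBounded (connectedComponentIn Xᶜ y)
      rwa [← connectedComponentIn_eq hy]
    have hcl : closure W ⊆ W ∪ X := closure_component_subset hXcomp.isClosed z
    have hclU : closure W ⊆ U' := hcl.trans (union_subset hWU hXsub)
    have hK : IsCompact (g '' closure W) :=
      hWb.isCompact_closure.image_of_continuousOn (H.holo.continuousOn.mono hclU)
    have hD : connectedComponentIn Xᶜ (g z) ⊆ g '' W := by
      refine isPreconnected_connectedComponentIn.subset_of_closure_inter_subset
        (hopen W hWU hWo) ⟨g z, mem_connectedComponentIn hgX, mem_image_of_mem g hzW⟩ ?_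
      rintro y ⟨hy, hyD⟩
      have hy' : y ∈ g '' closure W :=
        closure_minimal (image_mono subset_closure) hK.isClosed hy
      obtain ⟨x, hx, rfl⟩ := hy'
      rcases hcl hx with h | h
      · exact mem_image_of_mem g h
      · exact absurd (hXinv (mem_image_of_mem g h)) (connectedComponentIn_subset _ _ hyD)
    exact hK.isBounded.subset (hD.trans (image_mono subset_closure))
  refine ⟨?_, part2⟩
  rintro z ⟨hz, hgz⟩
  exact ⟨H.subset hz, fun h => hgz.2 (part2 (mem_image_of_mem g h))⟩
end
end
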